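/- For each m ≥ 1 let (Y_i)_{i≥1} and (Y′_{j,m})_{j≥1} be real random variables on a common probability space and let g_m: ℝ² → ℝ be measurable. Let γ ∈ [0, 1/2), let ρ: (0,∞) → (0,∞) be continuous with finite limits lim_{t→0+} t^γ ρ(t) < ∞ and lim_{t→∞} t ρ(t) < ∞, let (l_m) satisfy l_m/m → 0, and define the weight w(m,k) = m^{−1/2} ρ(k/m) for k > l_m and w(m,k) = 0 for k ≤ l_m. Suppose there are constants u(m) ≥ 0 with u(m) (log m)² / m^{2−2γ} → 0 such that E[ | Σ_{i=1}^{m} Σ_{j=k₁}^{k₂} g_m(Y_i, Y′_{j,m}) |² ] ≤ u(m)(k₂ − k₁ + 1) for all integers 1 ≤ k₁ ≤ k₂. Then sup_{k ≥ 1} w(m,k) · max_{0 ≤ l ≤ k} | (1/m) Σ_{i=1}^{m} Σ_{j=l+1}^{k} g_m(Y_i, Y′_{j,m}) | converges to 0 in probability as m → ∞. -/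

import Mathlib

open MeasureTheory ProbabilityTheory Filter Set

lemma aux_sq_bound (S : ℕ → ℝ) (hS : S 0 = 0) (n k : ℕ) (hk : k ≤ 2 ^ n) :
    S k ^ 2 ≤ (n + 1) * ∑ i ∈ Finset.range (n + 1), ∑ b ∈ Finset.range (2 ^ (n - i)),
      (S ((b + 1) * 2 ^ i) - S (b * 2 ^ i)) ^ 2 := by
  have htel : S k = ∑ i ∈ Finset.range (n + 1),
      (S (k / 2 ^ i * 2 ^ i) - S (k / 2 ^ (i + 1) * 2 ^ (i + 1))) := by
    rw [Finset.sum_range_sub' (fun i => S (k / 2 ^ i * 2 ^ i))]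
    have : k / 2 ^ (n + 1) = 0 := by
      apply Nat.div_eq_of_lt
      rw [pow_succ]; have := Nat.two_pow_pos n; omega
    simp [this, hS]
  have hcs := sq_sum_le_card_mul_sum_sq (s := Finset.range (n + 1))
    (f := fun i => (S (k / 2 ^ i * 2 ^ i) - S (k / 2 ^ (i + 1) * 2 ^ (i + 1))))
  rw [← htel] at hcs
  refine hcs.trans ?_
  simp only [Finset.card_range]
  push_cast
  gcongr with i hi
  have hi' : i ≤ n := by simpa [Nat.lt_succ_iff] using hi
  have hdd : k / 2 ^ (i + 1) = (k / 2 ^ i) / 2 := by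
    rw [pow_succ, Nat.div_div_eq_div_mul]
  have hle : k / 2 ^ i ≤ 2 ^ (n - i) := by
    apply Nat.div_le_of_le_mul
    rw [← pow_add]
    rwa [show i + (n - i) = n by omega]
  have hnn : ∀ b ∈ Finset.range (2 ^ (n - i)),
      0 ≤ (S ((b + 1) * 2 ^ i) - S (b * 2 ^ i)) ^ 2 := fun _ _ => sq_nonneg _
  rw [hdd, pow_succ 2 i]
  set d := k / 2 ^ i
  rcases Nat.even_or_odd' d with ⟨e, he | he⟩
  · have : d / 2 * (2 ^ i * 2) = d * 2 ^ i := by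
      rw [show d / 2 = e by omega, he]; ring
    rw [this]
    simpa using Finset.sum_nonneg hnn
  · have h1 : d / 2 * (2 ^ i * 2) = (2 * e) * 2 ^ i := by
      rw [show d / 2 = e by omega]; ring
    rw [h1, he]
    exact Finset.single_le_sum hnn (Finset.mem_range.2 (by omega : 2 * e < 2 ^ (n - i)))

lemma aux_max {Ω : Type*} [MeasurableSpace Ω] (P : Measure Ω)
    (f : ℕ → Ω → ℝ) (hf : ∀ j, Measurable (f j)) (U : ℝ) (hU : 0 ≤ U)
    (hb : ∀ a b : ℕ, a < b → ∫⁻ ω, ENNReal.ofReal ((∑ j ∈ Finset.Ioc a b, f j ω) ^ 2) ∂P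
      ≤ ENNReal.ofReal (U * ((b : ℝ) - a))) (n : ℕ) (c : ℝ) (hc : 0 < c) :
    P {ω | ∃ k ≤ 2 ^ n, ∃ l ≤ k, c < |∑ j ∈ Finset.Ioc l k, f j ω|}
      ≤ ENNReal.ofReal (4 * (n + 1) ^ 2 * 2 ^ n * U / c ^ 2) := by
  set V : Ω → ℝ := fun ω => ∑ i ∈ Finset.range (n + 1), ∑ b ∈ Finset.range (2 ^ (n - i)),
      (∑ j ∈ Finset.Ioc (b * 2 ^ i) ((b + 1) * 2 ^ i), f j ω) ^ 2 with hV
  have hVm : Measurable V := by fun_prop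
  have hsplit : ∀ a b : ℕ, a ≤ b → ∀ ω, ∑ j ∈ Finset.Ioc a b, f j ω
      = ∑ j ∈ Finset.Ioc 0 b, f j ω - ∑ j ∈ Finset.Ioc 0 a, f j ω := by
    intro a b hab ω
    have := Finset.sum_Ioc_consecutive (fun j => f j ω) (Nat.zero_le a) hab
    linarith
  have hEV : ∫⁻ ω, ENNReal.ofReal (V ω) ∂P ≤ ENNReal.ofReal ((n + 1) * 2 ^ n * U) := by
    have h1 : ∀ ω, ENNReal.ofReal (V ω) = ∑ i ∈ Finset.range (n + 1),
        ∑ b ∈ Finset.range (2 ^ (n - i)),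
        ENNReal.ofReal ((∑ j ∈ Finset.Ioc (b * 2 ^ i) ((b + 1) * 2 ^ i), f j ω) ^ 2) := by
      intro ω
      rw [hV]
      simp only
      rw [ENNReal.ofReal_sum_of_nonneg (fun i _ => Finset.sum_nonneg fun _ _ => sq_nonneg _)]
      refine Finset.sum_congr rfl fun i _ => ?_
      rw [ENNReal.ofReal_sum_of_nonneg (fun i _ => sq_nonneg _)]
    simp_rw [h1]
    rw [lintegral_finsetSum _ (fun i _ => by fun_prop)]
    have h2 : ∀ i ∈ Finset.range (n + 1), ∫⁻ ω, ∑ b ∈ Finset.range (2 ^ (n - i)),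
        ENNReal.ofReal ((∑ j ∈ Finset.Ioc (b * 2 ^ i) ((b + 1) * 2 ^ i), f j ω) ^ 2) ∂P
        ≤ ENNReal.ofReal (2 ^ n * U) := by
      intro i hi
      have hi' : i ≤ n := by simpa [Nat.lt_succ_iff] using hi
      rw [lintegral_finsetSum _ (fun i _ => by fun_prop)]
      have h3 : ∀ b ∈ Finset.range (2 ^ (n - i)), ∫⁻ ω,
        ENNReal.ofReal ((∑ j ∈ Finset.Ioc (b * 2 ^ i) ((b + 1) * 2 ^ i), f j ω) ^ 2) ∂P
        ≤ ENNReal.ofReal (2 ^ i * U) := by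
        intro b _
        refine (hb _ _ ?_).trans (le_of_eq ?_)
        · have := Nat.two_pow_pos i
          nlinarith
        · congr 1; push_cast; ring
      refine (Finset.sum_le_sum h3).trans ?_
      rw [Finset.sum_const, Finset.card_range, ← ENNReal.ofReal_nsmul]
      apply ENNReal.ofReal_le_ofReal
      rw [nsmul_eq_mul]
      push_cast
      rw [← mul_assoc, ← pow_add, show n - i + i = n by omega]
    refine (Finset.sum_le_sum h2).trans ?_
    rw [Finset.sum_const, Finset.card_range, ← ENNReal.ofReal_nsmul]
    apply ENNReal.ofReal_le_ofReal
    rw [nsmul_eq_mul]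
    push_cast
    exact le_of_eq (by ring)
  set s : ℝ := c ^ 2 / (4 * (n + 1)) with hs
  have hs0 : 0 < s := by positivity
  have hsub : {ω | ∃ k ≤ 2 ^ n, ∃ l ≤ k, c < |∑ j ∈ Finset.Ioc l k, f j ω|}
      ⊆ {ω | ENNReal.ofReal s ≤ ENNReal.ofReal (V ω)} := by
    rintro ω ⟨k, hk, l, hl, h⟩
    apply ENNReal.ofReal_le_ofReal
    have hVe : V ω = ∑ i ∈ Finset.range (n + 1), ∑ b ∈ Finset.range (2 ^ (n - i)),
      ((fun k => ∑ j ∈ Finset.Ioc 0 k, f j ω) ((b + 1) * 2 ^ i)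
        - (fun k => ∑ j ∈ Finset.Ioc 0 k, f j ω) (b * 2 ^ i)) ^ 2 := by
      rw [hV]
      refine Finset.sum_congr rfl fun i _ => Finset.sum_congr rfl fun b _ => ?_
      rw [hsplit _ _ (Nat.mul_le_mul_right _ (Nat.le_succ b))]
    have e1 := aux_sq_bound (fun k => ∑ j ∈ Finset.Ioc 0 k, f j ω) (by simp) n k hk
    have e2 := aux_sq_bound (fun k => ∑ j ∈ Finset.Ioc 0 k, f j ω) (by simp) n l (hl.trans hk)
    rw [← hVe] at e1 e2
    rw [hsplit l k hl] at h
    set x := ∑ j ∈ Finset.Ioc 0 k, f j ω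
    set y := ∑ j ∈ Finset.Ioc 0 l, f j ω
    have h4 : c ^ 2 ≤ (x - y) ^ 2 := by
      rw [← sq_abs (x - y)]
      exact pow_le_pow_left₀ hc.le h.le 2
    rw [hs, div_le_iff₀ (by positivity)]
    nlinarith [sq_nonneg (x + y)]
  refine (measure_mono hsub).trans ?_
  refine (meas_ge_le_lintegral_div (by fun_prop) (by simpa using hs0) (by simp)).trans ?_
  refine (ENNReal.div_le_div_right hEV _).trans ?_
  rw [← ENNReal.ofReal_div_of_pos hs0]
  apply ENNReal.ofReal_le_ofReal
  rw [hs]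
  apply le_of_eq
  field_simp

lemma aux_summable : Summable (fun r : ℕ => 4 * ((r : ℝ) + 1) ^ 2 * (1 / 2) ^ r) := by
  have h2 : Summable (fun r : ℕ => (r : ℝ) ^ 2 * (1 / 2 : ℝ) ^ r) :=
    summable_pow_mul_geometric_of_norm_lt_one 2 (by norm_num)
  have := ((summable_nat_add_iff 1).2 h2).mul_left 8
  refine this.congr fun r => ?_
  push_cast
  ring

lemma aux_weighted {Ω : Type*} [MeasurableSpace Ω] (P : Measure Ω)
    (f : ℕ → Ω → ℝ) (hf : ∀ j, Measurable (f j)) (U : ℝ) (hU : 0 ≤ U)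
    (hb : ∀ a b : ℕ, a < b → ∫⁻ ω, ENNReal.ofReal ((∑ j ∈ Finset.Ioc a b, f j ω) ^ 2) ∂P
      ≤ ENNReal.ofReal (U * ((b : ℝ) - a))) (q : ℕ) (v : ℕ → ℝ) (A : ℝ) (hA : 0 < A)
    (hv : ∀ k r : ℕ, 1 ≤ k → k ≤ 2 ^ (q + r) → (r = 0 ∨ 2 ^ (q + r) < 2 * k) →
      v k ≤ A * (1 / 2) ^ r) (ε : ℝ) (hε : 0 < ε) :
    P {ω | ∃ k : ℕ, 1 ≤ k ∧ ∃ l ≤ k, ε < v k * |∑ j ∈ Finset.Ioc l k, f j ω|}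
      ≤ ENNReal.ofReal ((∑' r : ℕ, 4 * ((r : ℝ) + 1) ^ 2 * (1 / 2) ^ r) *
        ((q + 1) ^ 2 * 2 ^ q * U * A ^ 2 / ε ^ 2)) := by
  have hsub : {ω | ∃ k : ℕ, 1 ≤ k ∧ ∃ l ≤ k, ε < v k * |∑ j ∈ Finset.Ioc l k, f j ω|} ⊆
      ⋃ r : ℕ, {ω | ∃ k ≤ 2 ^ (q + r), ∃ l ≤ k,
        ε * 2 ^ r / A < |∑ j ∈ Finset.Ioc l k, f j ω|} := by
    rintro ω ⟨k, hk1, l, hl, h⟩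
    have hex : ∃ r : ℕ, k ≤ 2 ^ (q + r) :=
      ⟨k, (Nat.lt_two_pow_self (n := k)).le.trans
        (Nat.pow_le_pow_right (by norm_num) (by omega))⟩
    classical
    have hr := Nat.find_spec hex
    have hmin : Nat.find hex = 0 ∨ 2 ^ (q + Nat.find hex) < 2 * k := by
      rcases Nat.eq_zero_or_pos (Nat.find hex) with h0 | h0
      · exact Or.inl h0
      · right
        have := Nat.find_min hex (m := Nat.find hex - 1) (by omega)
        rw [show q + Nat.find hex = (q + (Nat.find hex - 1)) + 1 by omega, pow_succ]
        omega
    refine mem_iUnion.2 ⟨Nat.find hex, k, hr, l, hl, ?_⟩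
    have hvk := hv k _ hk1 hr hmin
    generalize Nat.find hex = r at hvk
    have h1 := mul_le_mul_of_nonneg_right hvk (abs_nonneg (∑ j ∈ Finset.Ioc l k, f j ω))
    have h2 := h.trans_le h1
    rw [div_lt_iff₀ hA]
    have h3 : ((1:ℝ) / 2) ^ r * 2 ^ r = 1 := by rw [← mul_pow]; norm_num
    have h4 := mul_lt_mul_of_pos_right h2 (show (0:ℝ) < 2 ^ r by positivity)
    calc ε * 2 ^ r < _ := h4
      _ = |∑ j ∈ Finset.Ioc l k, f j ω| * A * ((1 / 2) ^ r * 2 ^ r) := by ring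
      _ = _ := by rw [h3, mul_one]
  refine (measure_mono hsub).trans ((measure_iUnion_le _).trans ?_)
  have hK := aux_summable.mul_right ((q + 1) ^ 2 * 2 ^ q * U * A ^ 2 / ε ^ 2)
  rw [← tsum_mul_right, ENNReal.ofReal_tsum_of_nonneg (fun r => by positivity) hK]
  refine ENNReal.tsum_le_tsum fun r => ?_
  refine (aux_max P f hf U hU hb (q + r) (ε * 2 ^ r / A) (by positivity)).trans ?_
  apply ENNReal.ofReal_le_ofReal
  have hq : ((q + r : ℕ) : ℝ) + 1 ≤ (r + 1) * (q + 1) := by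
    push_cast
    nlinarith [show (0:ℝ) ≤ (q:ℝ) * r by positivity]
  have h2 : (((q + r : ℕ) : ℝ) + 1) ^ 2 ≤ ((r + 1) * (q + 1)) ^ 2 :=
    pow_le_pow_left₀ (by positivity) hq 2
  calc 4 * (((q + r : ℕ) : ℝ) + 1) ^ 2 * 2 ^ (q + r) * U / (ε * 2 ^ r / A) ^ 2
      ≤ 4 * ((r + 1) * (q + 1)) ^ 2 * 2 ^ (q + r) * U / (ε * 2 ^ r / A) ^ 2 := by gcongr
    _ = _ := by
      rw [one_div, inv_pow, pow_add]
      field_simp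

lemma aux_rho (γ : ℝ) (ρ : ℝ → ℝ) (hρcont : ContinuousOn ρ (Ioi 0))
    (hρzero : ∃ L : ℝ, Tendsto (fun t : ℝ => t ^ γ * ρ t) (nhdsWithin 0 (Ioi 0)) (nhds L))
    (hρtop : ∃ L : ℝ, Tendsto (fun t : ℝ => t * ρ t) atTop (nhds L)) :
    ∃ C : ℝ, 0 < C ∧ ∀ t : ℝ, 0 < t → (t ≤ 1 → t ^ γ * ρ t ≤ C) ∧ (1 ≤ t → t * ρ t ≤ C) := by
  obtain ⟨L₀, h0⟩ := hρzero
  obtain ⟨L₁, h1⟩ := hρtop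
  have e0 := h0.eventually (eventually_le_nhds (lt_add_one L₀))
  have e1 := h1.eventually (eventually_le_nhds (lt_add_one L₁))
  rw [eventually_nhdsWithin_iff, Metric.eventually_nhds_iff] at e0
  obtain ⟨δ, hδ, e0⟩ := e0
  obtain ⟨T, e1⟩ := eventually_atTop.1 e1
  have c0 : ContinuousOn (fun t : ℝ => t ^ γ * ρ t) (Icc δ 1) := by
    refine ContinuousOn.mul ?_ (hρcont.mono fun x hx => lt_of_lt_of_le hδ hx.1)
    exact continuousOn_id.rpow_const fun x hx => Or.inl (lt_of_lt_of_le hδ hx.1).ne'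
  have c1 : ContinuousOn (fun t : ℝ => t * ρ t) (Icc 1 T) :=
    continuousOn_id.mul (hρcont.mono fun x hx => lt_of_lt_of_le one_pos hx.1)
  obtain ⟨M0, hM0⟩ := (isCompact_Icc.image_of_continuousOn c0).bddAbove
  obtain ⟨M1, hM1⟩ := (isCompact_Icc.image_of_continuousOn c1).bddAbove
  refine ⟨|L₀ + 1| + |L₁ + 1| + |M0| + |M1| + 1, by positivity, fun t ht => ⟨fun h => ?_, fun h => ?_⟩⟩
  · have b1 := le_abs_self (L₀ + 1)
    have b2 := le_abs_self M0
    have b3 := abs_nonneg (L₀ + 1)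
    have b4 := abs_nonneg (L₁ + 1)
    have b5 := abs_nonneg M0
    have b6 := abs_nonneg M1
    rcases lt_or_ge t δ with h' | h'
    · have := e0 (y := t) (by rw [Real.dist_eq, sub_zero, abs_of_pos ht]; exact h') ht
      linarith
    · have := hM0 (mem_image_of_mem _ (show t ∈ Icc δ 1 from ⟨h', h⟩))
      linarith
  · have b1 := le_abs_self (L₁ + 1)
    have b2 := le_abs_self M1
    have b3 := abs_nonneg (L₀ + 1)
    have b4 := abs_nonneg (L₁ + 1)
    have b5 := abs_nonneg M0
    have b6 := abs_nonneg M1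
    rcases lt_or_ge T t with h' | h'
    · have := e1 t h'.le
      linarith
    · have := hM1 (mem_image_of_mem _ (show t ∈ Icc 1 T from ⟨h, h'⟩))
      linarith

lemma aux_weight (γ : ℝ) (hγ0 : 0 ≤ γ) (ρ : ℝ → ℝ) (C : ℝ) (hC : 0 < C)
    (hρ : ∀ t : ℝ, 0 < t → (t ≤ 1 → t ^ γ * ρ t ≤ C) ∧ (1 ≤ t → t * ρ t ≤ C))
    (m : ℕ) (hm : 1 ≤ m) (q : ℕ) (hq : m ≤ 2 ^ q) (k r : ℕ) (hk : 1 ≤ k)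
    (hr : r = 0 ∨ 2 ^ (q + r) < 2 * k) :
    (m : ℝ) ^ (-(1 : ℝ) / 2) * ρ ((k : ℝ) / m) / m
      ≤ (2 * C * (m : ℝ) ^ (γ - 3 / 2)) * (1 / 2) ^ r := by
  have hm0 : (0 : ℝ) < m := by exact_mod_cast hm
  have hm1 : (1 : ℝ) ≤ m := by exact_mod_cast hm
  have hk0 : (0 : ℝ) < k := by exact_mod_cast hk
  have hk1 : (1 : ℝ) ≤ k := by exact_mod_cast hk
  have ht : 0 < (k : ℝ) / m := by positivity
  have key : ρ ((k : ℝ) / m) ≤ 2 * C * (m : ℝ) ^ γ * (1 / 2) ^ r := by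
    have hmγ : 1 ≤ (m : ℝ) ^ γ := Real.one_le_rpow hm1 hγ0
    rcases le_total ((k : ℝ) / m) 1 with h | h
    · have hr0 : r = 0 := by
        rcases hr with hr | hr
        · exact hr
        by_contra hne
        rw [div_le_one hm0] at h
        have hkm : k ≤ m := by exact_mod_cast h
        obtain ⟨s, rfl⟩ := Nat.exists_eq_succ_of_ne_zero hne
        have h1 : 2 ^ q ≤ 2 ^ (q + s) := Nat.pow_le_pow_right (by norm_num) (by omega)
        have h2 : 2 ^ (q + s.succ) = 2 ^ (q + s) * 2 := by
          rw [Nat.succ_eq_add_one, ← add_assoc, pow_succ]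
        omega
      have h1 := (hρ _ ht).1 h
      rw [Real.div_rpow hk0.le hm0.le] at h1
      have hkγ : 1 ≤ (k : ℝ) ^ γ := Real.one_le_rpow hk1 hγ0
      have hmp : 0 < (m : ℝ) ^ γ := by positivity
      rw [div_mul_eq_mul_div, div_le_iff₀ hmp] at h1
      subst hr0
      rw [pow_zero, mul_one]
      by_cases hρ0 : 0 ≤ ρ ((k : ℝ) / m)
      · nlinarith [mul_pos hC hmp]
      · nlinarith [mul_pos hC hmp]
    · have h1 := (hρ _ ht).2 h
      have h2 : ((2 : ℝ) ^ r) ≤ 2 * (k / m) := by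
        rcases hr with hr | hr
        · subst hr; simp; linarith
        · have h3 : (2 : ℝ) ^ (q + r) < 2 * k := by exact_mod_cast hr
          have h4 : (m : ℝ) ≤ 2 ^ q := by exact_mod_cast hq
          rw [← mul_div_assoc, le_div_iff₀ hm0]
          rw [pow_add] at h3
          have : (0 : ℝ) < 2 ^ r := by positivity
          nlinarith
      have h3 : ρ ((k : ℝ) / m) ≤ C / (k / m) := by
        rw [le_div_iff₀ ht]; linarith
      have h5 : C / ((k : ℝ) / m) ≤ 2 * C * (1 / 2) ^ r := by
        rw [div_le_iff₀ ht, one_div, inv_pow]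
        have h6 : 1 ≤ ((2 : ℝ) ^ r)⁻¹ * (2 * (k / m)) := by
          rw [inv_mul_eq_div, le_div_iff₀ (by positivity)]; linarith
        nlinarith
      calc _ ≤ 2 * C * (1 / 2) ^ r := h3.trans h5
        _ = 2 * C * 1 * (1 / 2) ^ r := by ring
        _ ≤ _ := by gcongr
  calc (m : ℝ) ^ (-(1 : ℝ) / 2) * ρ ((k : ℝ) / m) / m
      ≤ (m : ℝ) ^ (-(1 : ℝ) / 2) * (2 * C * (m : ℝ) ^ γ * (1 / 2) ^ r) / m := by gcongr
    _ = 2 * C * ((m : ℝ) ^ (-(1 : ℝ) / 2) * (m : ℝ) ^ γ / (m : ℝ) ^ (1 : ℝ)) * (1 / 2) ^ r := by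
        rw [Real.rpow_one]; ring
    _ = _ := by
        rw [← Real.rpow_add hm0, ← Real.rpow_sub hm0]
        congr 3
        ring

/-- Lemma A.1: under the weight-function regularity (Assumption 1) and the moment bound
`E[|Σ_{i=1}^m Σ_{j=k₁}^{k₂} g_m(Y_i,Y'_{j,m})|²] ≤ u(m)(k₂-k₁+1)` with
`u(m)(log m)²/m^{2-2γ} → 0`, the weighted supremum
`sup_{k≥1} w(m,k) max_{0≤l≤k} |(1/m) Σ_{i=1}^m Σ_{j=l+1}^k g_m(Y_i,Y'_{j,m})|`
converges to `0` in probability as `m → ∞`. -/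
theorem remainder_negligible_in_probability
    {Ω : Type*} [MeasurableSpace Ω] (P : Measure Ω) [IsProbabilityMeasure P]
    (Y : ℕ → Ω → ℝ) (Y' : ℕ → ℕ → Ω → ℝ) (g : ℕ → ℝ → ℝ → ℝ)
    (hYmeas : ∀ i, Measurable (Y i)) (hY'meas : ∀ m j, Measurable (Y' m j))
    (hgmeas : ∀ m, Measurable (Function.uncurry (g m)))
    (γ : ℝ) (hγ0 : 0 ≤ γ) (hγ : γ < 1 / 2)
    (ρ : ℝ → ℝ) (hρpos : ∀ t : ℝ, 0 < t → 0 < ρ t) (hρcont : ContinuousOn ρ (Ioi 0))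
    (hρzero : ∃ L : ℝ, Tendsto (fun t : ℝ => t ^ γ * ρ t) (nhdsWithin 0 (Ioi 0)) (nhds L))
    (hρtop : ∃ L : ℝ, Tendsto (fun t : ℝ => t * ρ t) atTop (nhds L))
    (l : ℕ → ℕ) (hl : Tendsto (fun m : ℕ => (l m : ℝ) / m) atTop (nhds 0))
    (w : ℕ → ℕ → ℝ)
    (hw : ∀ m k : ℕ, w m k =
      if l m < k then (m : ℝ) ^ (-(1 : ℝ) / 2) * ρ ((k : ℝ) / m) else 0)
    (u : ℕ → ℝ) (hu0 : ∀ m, 0 ≤ u m)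
    (hu : Tendsto (fun m : ℕ => u m * (Real.log m) ^ 2 / (m : ℝ) ^ (2 - 2 * γ))
      atTop (nhds 0))
    (hbound : ∀ m k₁ k₂ : ℕ, 1 ≤ k₁ → k₁ ≤ k₂ →
      (∫⁻ ω, ENNReal.ofReal ((∑ i ∈ Finset.Icc 1 m, ∑ j ∈ Finset.Icc k₁ k₂,
          g m (Y i ω) (Y' m j ω)) ^ 2) ∂P)
        ≤ ENNReal.ofReal (u m * ((k₂ - k₁ + 1 : ℕ) : ℝ))) :
    ∀ ε : ℝ, 0 < ε →
      Tendsto (fun m : ℕ =>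
        P {ω | ∃ k : ℕ, 1 ≤ k ∧ ∃ l' : ℕ, l' ≤ k ∧
          w m k * |(1 / (m : ℝ)) * ∑ i ∈ Finset.Icc 1 m, ∑ j ∈ Finset.Icc (l' + 1) k,
            g m (Y i ω) (Y' m j ω)| > ε})
        atTop (nhds 0) := by
  intro ε hε
  obtain ⟨C, hC, hρ⟩ := aux_rho γ ρ hρcont hρzero hρtop
  set K : ℝ := ∑' r : ℕ, 4 * ((r : ℝ) + 1) ^ 2 * (1 / 2) ^ r with hK
  have hK0 : 0 ≤ K := tsum_nonneg fun r => by positivity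
  have hlim : Tendsto (fun m : ℕ => ENNReal.ofReal (K * 288 * C ^ 2 / ε ^ 2 *
      (u m * (Real.log m) ^ 2 / (m : ℝ) ^ (2 - 2 * γ)))) atTop (nhds 0) := by
    have := ENNReal.tendsto_ofReal (hu.const_mul (K * 288 * C ^ 2 / ε ^ 2))
    simpa using this
  refine tendsto_of_tendsto_of_tendsto_of_le_of_le' tendsto_const_nhds hlim
    (Eventually.of_forall fun _ => zero_le) ?_
  filter_upwards [eventually_ge_atTop 2] with m hm
  have hm0 : (0 : ℝ) < m := by exact_mod_cast (by omega : 0 < m)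
  have hm2 : (2 : ℝ) ≤ m := by exact_mod_cast hm
  set q := Nat.clog 2 m with hq
  have hq1 : m ≤ 2 ^ q := Nat.le_pow_clog (by norm_num) m
  have hq0 : 0 < q := Nat.clog_pos (by norm_num) hm
  have hq2 : 2 ^ (q - 1) < m := Nat.pow_pred_clog_lt_self (by norm_num) (by omega)
  have hq2' : (2 : ℝ) ^ (q - 1) < m := by exact_mod_cast hq2
  have hq3 : (2 : ℝ) ^ q ≤ 2 * m := by
    have : (2 : ℝ) ^ q = 2 ^ (q - 1) * 2 := by rw [← pow_succ]; congr 1; omega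
    linarith
  have hl2 : (1 : ℝ) / 2 ≤ Real.log 2 := by have := Real.log_two_gt_d9; linarith
  have hlm : Real.log 2 ≤ Real.log m := Real.log_le_log (by norm_num) hm2
  have hq4 : (q : ℝ) + 1 ≤ 6 * Real.log m := by
    have h1 := Real.log_le_log (by positivity) hq2'.le
    rw [Real.log_pow, Nat.cast_sub (by omega : 1 ≤ q)] at h1
    push_cast at h1
    have : (1 : ℝ) ≤ q := by exact_mod_cast hq0
    nlinarith
  have hg : ∀ i j, Measurable fun ω => g m (Y i ω) (Y' m j ω) := fun i j =>
    (hgmeas m).comp ((hYmeas i).prodMk (hY'meas m j))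
  have hIcc : ∀ a b : ℕ, Finset.Icc (a + 1) b = Finset.Ioc a b := by
    intro a b; ext x; simp [Nat.succ_le_iff]
  have main := aux_weighted P (fun j ω => ∑ i ∈ Finset.Icc 1 m, g m (Y i ω) (Y' m j ω))
    (fun j => Finset.measurable_sum _ fun i _ => hg i j) (u m) (hu0 m)
    (by
      intro a b hab
      have h := hbound m (a + 1) b (by omega) (by omega)
      have h2 : ((b - (a + 1) + 1 : ℕ) : ℝ) = (b : ℝ) - a := by
        rw [show b - (a + 1) + 1 = b - a by omega, Nat.cast_sub hab.le]
      rw [h2, hIcc a] at h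
      refine le_trans (le_of_eq ?_) h
      refine lintegral_congr fun ω => ?_
      rw [Finset.sum_comm])
    q (fun k => w m k / m) (2 * C * (m : ℝ) ^ (γ - 3 / 2)) (by positivity)
    (by
      intro k r hk _ hr
      rw [hw]
      split_ifs
      · exact aux_weight γ hγ0 ρ C hC hρ m (by omega) q hq1 k r hk hr
      · rw [zero_div]; positivity)
    ε hε
  refine le_trans (measure_mono ?_) (main.trans (ENNReal.ofReal_le_ofReal ?_))
  · rintro ω ⟨k, hk, l', hl', h⟩
    refine ⟨k, hk, l', hl', ?_⟩
    rw [gt_iff_lt, hIcc l', Finset.sum_comm, abs_mul, abs_of_pos (by positivity)] at h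
    refine h.trans_le (le_of_eq ?_)
    ring
  · have hA : (m : ℝ) * ((m : ℝ) ^ (γ - 3 / 2)) ^ 2 = 1 / (m : ℝ) ^ (2 - 2 * γ) := by
      rw [← Real.rpow_natCast, ← Real.rpow_mul hm0.le, one_div, ← Real.rpow_neg hm0.le]
      nth_rewrite 1 [← Real.rpow_one (m : ℝ)]
      rw [← Real.rpow_add hm0]
      congr 1
      push_cast
      ring
    have hu1 := hu0 m
    rw [← hK]
    calc K * (((q : ℝ) + 1) ^ 2 * 2 ^ q * u m * (2 * C * (m : ℝ) ^ (γ - 3 / 2)) ^ 2 / ε ^ 2)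
        ≤ K * ((6 * Real.log m) ^ 2 * (2 * m) * u m
          * (2 * C * (m : ℝ) ^ (γ - 3 / 2)) ^ 2 / ε ^ 2) := by gcongr
      _ = K * 288 * C ^ 2 / ε ^ 2 * (u m * (Real.log m) ^ 2
          * ((m : ℝ) * ((m : ℝ) ^ (γ - 3 / 2)) ^ 2)) := by ring
      _ = _ := by rw [hA]; ring
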